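/- Under Assumption 1, for each i ∈ [m] the causal Markov boundary of X_i is unique: if A and B are both minimum-cardinality causal Markov blankets of X_i, then A = B. (Equivalently, the minimal generative model of the joint distribution is unique.) -/

import Mathlib

open Finset

/-- Probability of an event under the probability mass function `p` on a finite space. -/
noncomputable def pr {Ω : Type} [Fintype Ω] (p : Ω → ℝ) (E : Set Ω) : ℝ :=
  ∑ ω : Ω, E.indicator p ω

/-- Shannon conditional mutual information `I(A ; B | C)` of finite-valued random variables
on a finite probability space with pmf `p` (terms with vanishing probability contribute `0`,
by the conventions `Real.log 0 = 0`, `x / 0 = 0`). -/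
noncomputable def cmi {Ω α β γ : Type} [Fintype Ω] [Fintype α] [Fintype β] [Fintype γ]
    (p : Ω → ℝ) (A : Ω → α) (B : Ω → β) (C : Ω → γ) : ℝ :=
  ∑ a : α, ∑ b : β, ∑ c : γ,
    pr p {ω | A ω = a ∧ B ω = b ∧ C ω = c} *
      Real.log (pr p {ω | A ω = a ∧ B ω = b ∧ C ω = c} * pr p {ω | C ω = c} /
        (pr p {ω | A ω = a ∧ C ω = c} * pr p {ω | B ω = b ∧ C ω = c}))

/-- `A` and `B` are conditionally independent given `C` (under the pmf `p`). -/
def CondIndep {Ω α β γ : Type} [Fintype Ω] (p : Ω → ℝ)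
    (A : Ω → α) (B : Ω → β) (C : Ω → γ) : Prop :=
  ∀ (a : α) (b : β) (c : γ),
    pr p {ω | A ω = a ∧ B ω = b ∧ C ω = c} * pr p {ω | C ω = c}
      = pr p {ω | A ω = a ∧ C ω = c} * pr p {ω | B ω = b ∧ C ω = c}

/-- Trajectories of `m` processes over `n` time steps with alphabet `𝒳`:
`ω i j` is the value of process `i` at (0-indexed) time `j`. -/
abbrev Traj (m n : ℕ) (𝒳 : Type) := Fin m → Fin n → 𝒳

/-- The past `X_S^{j-1}`: the values of the processes in `S` at times strictly before `j`;
all other entries are masked by `none`. -/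
def past {m n : ℕ} {𝒳 : Type} (S : Finset (Fin m)) (j : Fin n) (ω : Traj m n 𝒳) :
    Fin m → Fin n → Option 𝒳 :=
  fun k t => if k ∈ S ∧ t < j then some (ω k t) else none

/-- Causally conditioned directed information
`I(X_S → X_i ‖ X_T) := Σ_{j=1}^{n} I(X_S^{j-1} ; X_{i,j} | X_i^{j-1}, X_T^{j-1})`. -/
noncomputable def di {m n : ℕ} {𝒳 : Type} [Fintype 𝒳] [DecidableEq 𝒳]
    (p : Traj m n 𝒳 → ℝ) (S : Finset (Fin m)) (i : Fin m) (T : Finset (Fin m)) : ℝ :=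
  ∑ j : Fin n,
    cmi p (past S j) (fun ω => ω i j) (fun ω => (past {i} j ω, past T j ω))

/-- Assumption 1: the joint distribution is strictly positive (and is a pmf), and at each
time `j` the variables `X_{1,j}, …, X_{m,j}` are mutually conditionally independent given
the full past `X_{[m]}^{j-1}` (stated in the division-free form
`P(joint ∧ past) · P(past)^{m-1} = Π_i P(X_{i,j} = x_i ∧ past)`). -/
def Assumption1 {m n : ℕ} {𝒳 : Type} [Fintype 𝒳] [DecidableEq 𝒳]
    (p : Traj m n 𝒳 → ℝ) : Prop :=
  (∀ ω, 0 < p ω) ∧ (∑ ω : Traj m n 𝒳, p ω = 1) ∧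
    ∀ (j : Fin n) (x : Fin m → 𝒳) (h : Fin m → Fin n → Option 𝒳),
      pr p {ω | (∀ i, ω i j = x i) ∧ past Finset.univ j ω = h} *
          pr p {ω | past Finset.univ j ω = h} ^ (m - 1)
        = ∏ i : Fin m, pr p {ω | ω i j = x i ∧ past Finset.univ j ω = h}

/-- `S ⊆ [m]∖{i}` is a causal Markov blanket of `X_i` if
`I(X_{[m]∖({i}∪S)} → X_i ‖ X_S) = 0`. -/
def IsCausalBlanket {m n : ℕ} {𝒳 : Type} [Fintype 𝒳] [DecidableEq 𝒳]
    (p : Traj m n 𝒳 → ℝ) (i : Fin m) (S : Finset (Fin m)) : Prop :=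
  S ⊆ Finset.univ.erase i ∧ di p (Finset.univ.erase i \ S) i S = 0

/-- A causal Markov boundary `A(i)` of `X_i` is a causal Markov blanket of minimum
cardinality. -/
def IsCausalBoundary {m n : ℕ} {𝒳 : Type} [Fintype 𝒳] [DecidableEq 𝒳]
    (p : Traj m n 𝒳 → ℝ) (i : Fin m) (A : Finset (Fin m)) : Prop :=
  IsCausalBlanket p i A ∧
    ∀ B : Finset (Fin m), IsCausalBlanket p i B → A.card ≤ B.card

/-!
For a strictly positive law, `S` is a causal Markov blanket of `X_i` exactly when the conditional
law of `X_{i,j}` given the full past is a function of the pasts of `X_i` and of the processes in `S`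
alone. Let `A` and `B` be blankets and let `ω` and `ω'` be trajectories whose pasts agree on
`{i} ∪ (A ∩ B)`. The hybrid trajectory equal to `ω` on `{i} ∪ A` and to `ω'` elsewhere has positive
probability; its past agrees with that of `ω` on `{i} ∪ A` and with that of `ω'` on `{i} ∪ B`, so
the conditional laws at `ω` and `ω'` coincide. Hence blankets are closed under intersection, and a
minimum blanket is contained in every blanket.
-/

section Gibbs

open InformationTheory

theorem mul_klFun_div {s t : ℝ} (hst : s = 0 → t = 0) :
    s * klFun (t / s) = t * Real.log (t / s) - (t - s) := by
  rcases eq_or_ne s 0 with rfl | hs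
  · simp [hst rfl]
  · rw [klFun_apply]
    field_simp
    ring

theorem mul_klFun_div_eq_zero_iff {s t : ℝ} (hs : 0 ≤ s) (ht : 0 ≤ t) (hst : s = 0 → t = 0) :
    s * klFun (t / s) = 0 ↔ t = s := by
  rcases eq_or_ne s 0 with rfl | hs0
  · simp [hst rfl]
  · simp [hs0, klFun_eq_zero_iff (div_nonneg ht hs), div_eq_one_iff_eq]

variable {ι : Type*} [Fintype ι] {f g : ι → ℝ}

theorem sum_mul_log_div_eq_sum_mul_klFun_div (hfg : ∀ i, g i = 0 → f i = 0)
    (hsum : ∑ i, f i = ∑ i, g i) :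
    ∑ i, f i * Real.log (f i / g i) = ∑ i, g i * klFun (f i / g i) := by
  simp [mul_klFun_div (hfg _), hsum]

theorem sum_mul_log_div_nonneg (hf : ∀ i, 0 ≤ f i) (hg : ∀ i, 0 ≤ g i)
    (hfg : ∀ i, g i = 0 → f i = 0) (hsum : ∑ i, f i = ∑ i, g i) :
    0 ≤ ∑ i, f i * Real.log (f i / g i) := by
  rw [sum_mul_log_div_eq_sum_mul_klFun_div hfg hsum]
  exact Finset.sum_nonneg fun i _ => mul_nonneg (hg i) (klFun_nonneg (div_nonneg (hf i) (hg i)))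

theorem sum_mul_log_div_eq_zero_iff (hf : ∀ i, 0 ≤ f i) (hg : ∀ i, 0 ≤ g i)
    (hfg : ∀ i, g i = 0 → f i = 0) (hsum : ∑ i, f i = ∑ i, g i) :
    ∑ i, f i * Real.log (f i / g i) = 0 ↔ f = g := by
  rw [sum_mul_log_div_eq_sum_mul_klFun_div hfg hsum, Finset.sum_eq_zero_iff_of_nonneg fun i _ =>
    mul_nonneg (hg i) (klFun_nonneg (div_nonneg (hf i) (hg i)))]
  simp only [Finset.mem_univ, true_imp_iff, funext_iff,
    mul_klFun_div_eq_zero_iff (hg _) (hf _) (hfg _)]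

end Gibbs

section Probability

variable {Ω α β γ δ : Type} [Fintype Ω] {p : Ω → ℝ}

theorem pr_nonneg (hp : ∀ ω, 0 ≤ p ω) (E : Set Ω) : 0 ≤ pr p E :=
  Finset.sum_nonneg fun ω _ => Set.indicator_nonneg (fun x _ => hp x) ω

theorem pr_mono (hp : ∀ ω, 0 ≤ p ω) {E F : Set Ω} (h : E ⊆ F) : pr p E ≤ pr p F :=
  Finset.sum_le_sum fun ω _ => Set.indicator_le_indicator_of_subset h hp ω

theorem pr_mono_null (hp : ∀ ω, 0 ≤ p ω) {E F : Set Ω} (hF : pr p F = 0) (h : E ⊆ F) :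
    pr p E = 0 :=
  le_antisymm (hF ▸ pr_mono hp h) (pr_nonneg hp E)

theorem pr_ne_zero_iff_nonempty (hp : ∀ ω, 0 < p ω) {E : Set Ω} : pr p E ≠ 0 ↔ E.Nonempty := by
  simp only [Ne, pr, Finset.sum_eq_zero_iff_of_nonneg fun ω _ =>
    Set.indicator_nonneg (fun x _ => (hp x).le) ω, Finset.mem_univ, true_imp_iff,
    Set.indicator_apply_eq_zero, (hp _).ne', imp_false, not_forall, not_not, Set.Nonempty]

theorem sum_pr_eq_and [Fintype α] (A : Ω → α) (Q : Ω → Prop) :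
    ∑ a, pr p {ω | A ω = a ∧ Q ω} = pr p {ω | Q ω} := by
  classical
  simp only [pr]
  rw [Finset.sum_comm]
  refine Finset.sum_congr rfl fun ω _ => ?_
  by_cases hQ : Q ω <;> simp [Set.indicator_apply, hQ]

section MutualInformation

/-- The probability mass function of the triple `(A, B, C)`. -/
noncomputable def jointMass (p : Ω → ℝ) (A : Ω → α) (B : Ω → β) (C : Ω → γ) (x : α × β × γ) : ℝ :=
  pr p {ω | A ω = x.1 ∧ B ω = x.2.1 ∧ C ω = x.2.2}

/-- The mass function of the coupling of `(A, C)` and `(B, C)` in which `A` and `B` are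
conditionally independent given `C`; conditional mutual information is the relative entropy of
`jointMass` with respect to it. Where `C = c` has probability `0`, division by zero gives `0`. -/
noncomputable def condIndepMass (p : Ω → ℝ) (A : Ω → α) (B : Ω → β) (C : Ω → γ)
    (x : α × β × γ) : ℝ :=
  pr p {ω | A ω = x.1 ∧ C ω = x.2.2} * pr p {ω | B ω = x.2.1 ∧ C ω = x.2.2} /
    pr p {ω | C ω = x.2.2}

theorem jointMass_nonneg (hp : ∀ ω, 0 ≤ p ω) (A : Ω → α) (B : Ω → β) (C : Ω → γ)
    (x : α × β × γ) : 0 ≤ jointMass p A B C x :=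
  pr_nonneg hp _

theorem condIndepMass_nonneg (hp : ∀ ω, 0 ≤ p ω) (A : Ω → α) (B : Ω → β) (C : Ω → γ)
    (x : α × β × γ) : 0 ≤ condIndepMass p A B C x :=
  div_nonneg (mul_nonneg (pr_nonneg hp _) (pr_nonneg hp _)) (pr_nonneg hp _)

theorem jointMass_eq_zero_of_condIndepMass_eq_zero (hp : ∀ ω, 0 ≤ p ω) {A : Ω → α} {B : Ω → β}
    {C : Ω → γ} {x : α × β × γ} (h : condIndepMass p A B C x = 0) : jointMass p A B C x = 0 := by
  rcases div_eq_zero_iff.1 h with h | hC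
  · rcases mul_eq_zero.1 h with hA | hB
    · exact pr_mono_null hp hA fun _ hω => ⟨hω.1, hω.2.2⟩
    · exact pr_mono_null hp hB fun _ hω => hω.2
  · exact pr_mono_null hp hC fun _ hω => hω.2.2

theorem condIndep_iff_jointMass_eq (hp : ∀ ω, 0 ≤ p ω) {A : Ω → α} {B : Ω → β} {C : Ω → γ} :
    CondIndep p A B C ↔ jointMass p A B C = condIndepMass p A B C := by
  simp only [CondIndep, funext_iff, Prod.forall, jointMass, condIndepMass]
  refine forall₃_congr fun a b c => ?_
  rcases eq_or_ne (pr p {ω | C ω = c}) 0 with hC | hC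
  · have hAC : pr p {ω | A ω = a ∧ C ω = c} = 0 := pr_mono_null hp hC fun _ hω => hω.2
    have hABC : pr p {ω | A ω = a ∧ B ω = b ∧ C ω = c} = 0 :=
      pr_mono_null hp hC fun _ hω => hω.2.2
    simp [hAC, hABC]
  · rw [eq_div_iff hC]

variable [Fintype α] [Fintype β] [Fintype γ]

theorem sum_jointMass_eq_sum_condIndepMass (A : Ω → α) (B : Ω → β) (C : Ω → γ) :
    ∑ x, jointMass p A B C x = ∑ x, condIndepMass p A B C x := by
  simp only [Fintype.sum_prod_type_right, jointMass, condIndepMass, ← Finset.sum_div,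
    ← Finset.sum_mul, ← Finset.mul_sum, sum_pr_eq_and, mul_self_div_self]

theorem cmi_eq_sum_mul_log_div (A : Ω → α) (B : Ω → β) (C : Ω → γ) :
    cmi p A B C =
      ∑ x, jointMass p A B C x * Real.log (jointMass p A B C x / condIndepMass p A B C x) := by
  simp only [cmi, Fintype.sum_prod_type, jointMass, condIndepMass, div_div_eq_mul_div]

theorem cmi_nonneg (hp : ∀ ω, 0 ≤ p ω) (A : Ω → α) (B : Ω → β) (C : Ω → γ) :
    0 ≤ cmi p A B C := by
  rw [cmi_eq_sum_mul_log_div]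
  exact sum_mul_log_div_nonneg (jointMass_nonneg hp A B C) (condIndepMass_nonneg hp A B C)
    (fun _ => jointMass_eq_zero_of_condIndepMass_eq_zero hp)
    (sum_jointMass_eq_sum_condIndepMass A B C)

theorem cmi_eq_zero_iff_condIndep (hp : ∀ ω, 0 ≤ p ω) (A : Ω → α) (B : Ω → β) (C : Ω → γ) :
    cmi p A B C = 0 ↔ CondIndep p A B C := by
  rw [cmi_eq_sum_mul_log_div, condIndep_iff_jointMass_eq hp]
  exact sum_mul_log_div_eq_zero_iff (jointMass_nonneg hp A B C) (condIndepMass_nonneg hp A B C)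
    (fun _ => jointMass_eq_zero_of_condIndepMass_eq_zero hp)
    (sum_jointMass_eq_sum_condIndepMass A B C)

end MutualInformation

section ConditionalProbability

/-- The conditional probability of `B = b` given the value of `F`, as a function of the sample
point: `P(B = b | F = F ω)`. -/
noncomputable def condProb (p : Ω → ℝ) (B : Ω → β) (F : Ω → γ) (b : β) (ω : Ω) : ℝ :=
  pr p {ω' | B ω' = b ∧ F ω' = F ω} / pr p {ω' | F ω' = F ω}

theorem condProb_congr_right {F : Ω → γ} {G : Ω → δ} (h : ∀ ω ω', F ω = F ω' ↔ G ω = G ω')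
    (p : Ω → ℝ) (B : Ω → β) : condProb p B F = condProb p B G := by
  simp only [condProb, funext_iff, h, implies_true]

theorem condProb_factorsThrough (p : Ω → ℝ) (B : Ω → β) (F : Ω → γ) (b : β) :
    (condProb p B F b).FactorsThrough F := fun ω ω' h => by
  simp only [condProb, h]

theorem condProb_prodMk_apply (p : Ω → ℝ) (A : Ω → α) (B : Ω → β) (C : Ω → γ) (b : β) (ω : Ω) :
    condProb p B (fun ω => (A ω, C ω)) b ω =
      pr p {ω' | A ω' = A ω ∧ B ω' = b ∧ C ω' = C ω} /
        pr p {ω' | A ω' = A ω ∧ C ω' = C ω} := by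
  simp only [condProb, Prod.mk.injEq, and_left_comm]

theorem pr_fiber_ne_zero (hp : ∀ ω, 0 < p ω) (F : Ω → γ) (ω : Ω) :
    pr p {ω' | F ω' = F ω} ≠ 0 :=
  (pr_ne_zero_iff_nonempty hp).2 ⟨ω, rfl⟩

theorem condIndep_iff_condProb_eq (hp : ∀ ω, 0 < p ω) {A : Ω → α} {B : Ω → β} {C : Ω → γ} :
    CondIndep p A B C ↔ ∀ b, condProb p B (fun ω => (A ω, C ω)) b = condProb p B C b := by
  have hAC (ω : Ω) : pr p {ω' | A ω' = A ω ∧ C ω' = C ω} ≠ 0 :=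
    (pr_ne_zero_iff_nonempty hp).2 ⟨ω, rfl, rfl⟩
  simp only [funext_iff, condProb_prodMk_apply]
  simp only [condProb, div_eq_div_iff (hAC _) (pr_fiber_ne_zero hp C _)]
  constructor
  · intro h b ω
    rw [h, mul_comm]
  · intro h a b c
    by_cases hac : pr p {ω | A ω = a ∧ C ω = c} = 0
    · have habc : pr p {ω | A ω = a ∧ B ω = b ∧ C ω = c} = 0 :=
        pr_mono_null (fun ω => (hp ω).le) hac fun _ hω => ⟨hω.1, hω.2.2⟩
      rw [hac, habc, zero_mul, zero_mul]
    · obtain ⟨ω, rfl, rfl⟩ := (pr_ne_zero_iff_nonempty hp).1 hac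
      rw [h, mul_comm]

-- The law of `B` given `C` averages the laws of `B` given `(A, C)` over each fiber of `C`.
theorem condProb_prodMk_eq_of_factorsThrough [Finite α] (hp : ∀ ω, 0 < p ω) {A : Ω → α}
    {B : Ω → β} {C : Ω → γ} {b : β}
    (h : (condProb p B (fun ω => (A ω, C ω)) b).FactorsThrough C) :
    condProb p B (fun ω => (A ω, C ω)) b = condProb p B C b := by
  cases nonempty_fintype α
  funext ω
  set q := condProb p B (fun ω => (A ω, C ω)) b ω with hq
  have hjoint (a : α) : pr p {ω' | A ω' = a ∧ B ω' = b ∧ C ω' = C ω} =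
      q * pr p {ω' | A ω' = a ∧ C ω' = C ω} := by
    by_cases ha : pr p {ω' | A ω' = a ∧ C ω' = C ω} = 0
    · rw [ha, mul_zero]
      exact pr_mono_null (fun ω => (hp ω).le) ha fun _ hω => ⟨hω.1, hω.2.2⟩
    · obtain ⟨ω', rfl, hω'⟩ := (pr_ne_zero_iff_nonempty hp).1 ha
      rw [← div_eq_iff ha, hq, ← h hω', condProb_prodMk_apply, hω']
  have hmarginal : pr p {ω' | B ω' = b ∧ C ω' = C ω} = q * pr p {ω' | C ω' = C ω} := by
    rw [← sum_pr_eq_and A, ← sum_pr_eq_and A (fun ω' => C ω' = C ω), Finset.mul_sum]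
    exact Finset.sum_congr rfl fun a _ => hjoint a
  exact eq_div_of_mul_eq (pr_fiber_ne_zero hp C ω) hmarginal.symm

theorem condIndep_iff_factorsThrough [Finite α] (hp : ∀ ω, 0 < p ω) {A : Ω → α} {B : Ω → β}
    {C : Ω → γ} :
    CondIndep p A B C ↔ ∀ b, (condProb p B (fun ω => (A ω, C ω)) b).FactorsThrough C := by
  rw [condIndep_iff_condProb_eq hp]
  refine forall_congr' fun b => ⟨fun h => ?_, condProb_prodMk_eq_of_factorsThrough hp⟩
  rw [h]
  exact condProb_factorsThrough p B C b

end ConditionalProbability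

end Probability

section Past

variable {m n : ℕ} {𝒳 : Type} {j : Fin n}

theorem past_eq_past_iff {S : Finset (Fin m)} {ω ω' : Traj m n 𝒳} :
    past S j ω = past S j ω' ↔ ∀ k ∈ S, ∀ t < j, ω k t = ω' k t := by
  simp only [funext_iff, past]
  grind

theorem past_union_eq_past_union_iff {S T : Finset (Fin m)} {ω ω' : Traj m n 𝒳} :
    past (S ∪ T) j ω = past (S ∪ T) j ω' ↔
      past S j ω = past S j ω' ∧ past T j ω = past T j ω' := by
  simp only [past_eq_past_iff, Finset.mem_union, or_imp, forall_and]

theorem factorsThrough_past_inter {δ : Type*} {f : Traj m n 𝒳 → δ} {S T : Finset (Fin m)}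
    (hS : f.FactorsThrough (past S j)) (hT : f.FactorsThrough (past T j)) :
    f.FactorsThrough (past (S ∩ T) j) := by
  intro ω ω' h
  rw [past_eq_past_iff] at h
  let hybrid : Traj m n 𝒳 := S.piecewise ω ω'
  have hωS : past S j ω = past S j hybrid :=
    past_eq_past_iff.2 fun k hk t _ => by simp [hybrid, hk]
  have hωT : past T j hybrid = past T j ω' := past_eq_past_iff.2 fun k hk t ht => by
    by_cases hkS : k ∈ S
    · simpa [hybrid, hkS] using h k (Finset.mem_inter.2 ⟨hkS, hk⟩) t ht
    · simp [hybrid, hkS]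
  exact (hS hωS).trans (hT hωT)

end Past

section CausalBlanket

variable {m n : ℕ} {𝒳 : Type} [Fintype 𝒳] [DecidableEq 𝒳] {p : Traj m n 𝒳 → ℝ} {i : Fin m}
  {A B S : Finset (Fin m)}

theorem di_eq_zero_iff_condIndep (hp : ∀ ω, 0 ≤ p ω) (S : Finset (Fin m)) (i : Fin m)
    (T : Finset (Fin m)) :
    di p S i T = 0 ↔ ∀ j, CondIndep p (past S j) (fun ω => ω i j)
      (fun ω => (past {i} j ω, past T j ω)) := by
  rw [di, Finset.sum_eq_zero_iff_of_nonneg fun j _ => cmi_nonneg hp _ _ _]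
  simp only [Finset.mem_univ, true_imp_iff, cmi_eq_zero_iff_condIndep hp]

theorem isCausalBlanket_iff_factorsThrough (hp : ∀ ω, 0 < p ω) :
    IsCausalBlanket p i S ↔ S ⊆ Finset.univ.erase i ∧ ∀ j x,
      (condProb p (fun ω => ω i j) (past Finset.univ j) x).FactorsThrough
        (past (insert i S) j) := by
  have hinsert (j : Fin n) (ω ω' : Traj m n 𝒳) : (past {i} j ω, past S j ω) =
      (past {i} j ω', past S j ω') ↔ past (insert i S) j ω = past (insert i S) j ω' := by
    rw [Prod.mk.injEq, Finset.insert_eq, past_union_eq_past_union_iff]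
  have huniv : (Finset.univ.erase i \ S) ∪ insert i S = Finset.univ := by grind
  refine and_congr_right fun _ => (di_eq_zero_iff_condIndep (fun ω => (hp ω).le) _ i S).trans <|
    forall_congr' fun j => (condIndep_iff_factorsThrough hp).trans <| forall_congr' fun x => ?_
  have hcond : condProb p (fun ω => ω i j)
      (fun ω => (past (Finset.univ.erase i \ S) j ω, past {i} j ω, past S j ω)) =
        condProb p (fun ω => ω i j) (past Finset.univ j) :=
    condProb_congr_right (fun ω ω' => by
      rw [Prod.mk.injEq, hinsert, ← past_union_eq_past_union_iff, huniv]) p _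
  simp only [hcond, Function.FactorsThrough, hinsert]

theorem IsCausalBlanket.inter (hp : ∀ ω, 0 < p ω) (hA : IsCausalBlanket p i A)
    (hB : IsCausalBlanket p i B) : IsCausalBlanket p i (A ∩ B) := by
  rw [isCausalBlanket_iff_factorsThrough hp] at hA hB ⊢
  refine ⟨Finset.inter_subset_left.trans hA.1, fun j x => ?_⟩
  rw [Finset.insert_inter_distrib]
  exact factorsThrough_past_inter (hA.2 j x) (hB.2 j x)

theorem IsCausalBoundary.subset_of_isCausalBlanket (hp : ∀ ω, 0 < p ω)
    (hA : IsCausalBoundary p i A) (hB : IsCausalBlanket p i B) : A ⊆ B :=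
  Finset.inter_eq_left.1 <|
    Finset.eq_of_subset_of_card_le Finset.inter_subset_left (hA.2 _ (hA.1.inter hp hB))

theorem stmt_5_general (hp : ∀ ω, 0 < p ω) (hA : IsCausalBoundary p i A)
    (hB : IsCausalBoundary p i B) : A = B :=
  (hA.subset_of_isCausalBlanket hp hB.1).antisymm (hB.subset_of_isCausalBlanket hp hA.1)

end CausalBlanket

/-- uniqueness of the causal Markov boundary / minimal generative model.
Under Assumption 1, any two minimum-cardinality causal Markov blankets of `X_i` coincide. -/
theorem stmt_5 {m n : ℕ} (hm : 2 ≤ m) (hn : 1 ≤ n)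
    {𝒳 : Type} [Fintype 𝒳] [DecidableEq 𝒳] [Nonempty 𝒳]
    (p : Traj m n 𝒳 → ℝ) (hp : Assumption1 p)
    (i : Fin m) (A B : Finset (Fin m))
    (hA : IsCausalBoundary p i A) (hB : IsCausalBoundary p i B) :
    A = B :=
  stmt_5_general hp.1 hA hB
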